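/- Under the stated hypotheses, the spectrum of B = A + V is contained in the closed δ_V-neighborhood of the spectrum of A, i.e. spec(B) ⊆ { λ ∈ ℝ : dist(λ, spec(A)) ≤ δ_V }, where δ_V = ‖V‖·tan((1/2)·arctan(2‖V‖/d)). -/

import Mathlib

/-- `E` is the projection-valued spectral measure of the bounded self-adjoint operator `T`
on the complex Hilbert space `H`: each `E Δ` (for Borel `Δ ⊆ ℝ`) is an orthogonal
projection, `E` is multiplicative and countably additive (in the strong sense), `E ℝ = 1`,
each `E Δ` commutes with `T`, and on the range of `E Δ` the operator `T` has its
approximate point spectrum inside the closure of `Δ` (which uniquely characterizes the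
spectral measure of `T`). -/
structure IsSpectralMeasure {H : Type*} [NormedAddCommGroup H] [InnerProductSpace ℂ H]
    [CompleteSpace H] (T : H →L[ℂ] H) (E : Set ℝ → H →L[ℂ] H) : Prop where
  isSelfAdjoint : ∀ Δ : Set ℝ, MeasurableSet Δ → IsSelfAdjoint (E Δ)
  map_inter : ∀ Δ₁ Δ₂ : Set ℝ, MeasurableSet Δ₁ → MeasurableSet Δ₂ →
    E Δ₁ * E Δ₂ = E (Δ₁ ∩ Δ₂)
  map_univ : E Set.univ = 1
  countably_additive : ∀ Δ : ℕ → Set ℝ, (∀ n, MeasurableSet (Δ n)) →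
    Pairwise (Function.onFun Disjoint Δ) →
    ∀ x : H, HasSum (fun n => E (Δ n) x) (E (⋃ n, Δ n) x)
  commutes : ∀ Δ : Set ℝ, MeasurableSet Δ → Commute T (E Δ)
  spectrum_loc : ∀ Δ : Set ℝ, MeasurableSet Δ → ∀ x : H, E Δ x = x →
    ∀ μ : ℝ, Metric.infDist μ Δ * ‖x‖ ≤ ‖T x - (μ : ℂ) • x‖

/-!
The number `δ = ‖V‖ tan (arctan (2‖V‖/d) / 2)` is the nonnegative root of `δ (δ + d) = ‖V‖²`.
Of the parts of `σ` and `τ` lying in `[a, ∞)`, at least one lies in `[a + d, ∞)`, so on the range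
of `E [a, ∞)` the form of `A + V` dominates, up to the choice of blocks, that of the matrix
`!![a, -‖V‖; -‖V‖, a + d]`, whose least eigenvalue is `a - δ`. Symmetrically, the form is at most
`a + δ` on the range of `E (-∞, a]`. If `l` is at distance `m > δ` from the spectrum of `A`, then
`A + V - l` is therefore at least `m - δ` on the range of `E [l, ∞)` and at most `-(m - δ)` on its
orthogonal complement, which bounds it below in norm by `m - δ`.
-/

open scoped InnerProductSpace

theorem mul_tan_half_arctan_nonneg {v d : ℝ} (hv : 0 ≤ v) (hd : 0 ≤ d) :
    0 ≤ v * Real.tan (Real.arctan (2 * v / d) / 2) := by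
  have hθ : 0 ≤ Real.arctan (2 * v / d) := Real.arctan_nonneg.2 (by positivity)
  have hθ' := Real.arctan_lt_pi_div_two (2 * v / d)
  exact mul_nonneg hv
    (Real.tan_nonneg_of_nonneg_of_le_pi_div_two (by linarith) (by linarith))

theorem mul_tan_half_arctan_mul_self_add {v d : ℝ} (hd : d ≠ 0) :
    v * Real.tan (Real.arctan (2 * v / d) / 2) *
      (v * Real.tan (Real.arctan (2 * v / d) / 2) + d) = v ^ 2 := by
  rcases eq_or_ne v 0 with rfl | hv
  · simp
  set t := Real.tan (Real.arctan (2 * v / d) / 2)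
  have htan : 2 * v / d = 2 * t / (1 - t ^ 2) := by
    rw [← Real.tan_two_mul, mul_div_cancel₀ _ two_ne_zero, Real.tan_arctan]
  have ht : 1 - t ^ 2 ≠ 0 := fun h => by
    rw [h, div_zero] at htan
    exact div_ne_zero (mul_ne_zero two_ne_zero hv) hd htan
  rw [div_eq_div_iff hd ht] at htan
  linear_combination (-v / 2) * htan

theorem sInf_image2_dist_le_dist {X : Type*} [PseudoMetricSpace X] {S T : Set X} {s t : X}
    (hs : s ∈ S) (ht : t ∈ T) : sInf (Set.image2 dist S T) ≤ dist s t :=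
  csInf_le ⟨0, by rintro _ ⟨a, -, b, -, rfl⟩; exact dist_nonneg⟩ (Set.mem_image2_of_mem hs ht)

theorem isClosed_of_isClosed_union_of_forall_le_dist {X : Type*} [PseudoMetricSpace X] {S T : Set X}
    {d : ℝ} (hST : IsClosed (S ∪ T)) (hd0 : 0 < d) (hd : ∀ s ∈ S, ∀ t ∈ T, d ≤ dist s t) :
    IsClosed S := by
  refine isClosed_of_closure_subset fun x hx => ?_
  refine (closure_minimal Set.subset_union_left hST hx).resolve_right fun hxT => ?_
  obtain ⟨s, hs, hsx⟩ := Metric.mem_closure_iff.1 hx d hd0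
  exact (hd s hs x hxT).not_gt (by rwa [dist_comm])

theorem inter_Ici_subset_Ici_add_or_of_forall_le_dist {S T : Set ℝ} {d : ℝ}
    (hd : ∀ s ∈ S, ∀ t ∈ T, d ≤ dist s t) (a : ℝ) :
    S ∩ Set.Ici a ⊆ Set.Ici (a + d) ∨ T ∩ Set.Ici a ⊆ Set.Ici (a + d) := by
  by_contra! h
  obtain ⟨⟨s, ⟨hsS, has⟩, hs⟩, ⟨t, ⟨htT, hat⟩, ht⟩⟩ := h.imp Set.not_subset.1 Set.not_subset.1
  rw [Set.mem_Ici] at has hat hs ht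
  have hlt : dist s t < d := by
    rw [Real.dist_eq, abs_lt]
    constructor <;> linarith
  exact hlt.not_ge (hd s hsS t htT)

theorem Ici_inter_subset_Ici_add_of_forall_le_dist {S : Set ℝ} {l m : ℝ}
    (hm : ∀ s ∈ S, m ≤ dist l s) : Set.Ici l ∩ S ⊆ Set.Ici (l + m) := by
  rintro s ⟨hls, hs⟩
  have h := hm s hs
  rw [dist_comm, Real.dist_eq, abs_of_nonneg (sub_nonneg.2 hls)] at h
  exact le_sub_iff_add_le'.1 h

theorem Iio_inter_subset_Iic_sub_of_forall_le_dist {S : Set ℝ} {l m : ℝ}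
    (hm : ∀ s ∈ S, m ≤ dist l s) : Set.Iio l ∩ S ⊆ Set.Iic (l - m) := by
  rintro s ⟨hsl, hs⟩
  have h := hm s hs
  rw [Real.dist_eq, abs_of_pos (sub_pos.2 hsl)] at h
  exact le_sub_comm.1 h

section QuadraticForm

variable {𝕜 E : Type*} [RCLike 𝕜] [NormedAddCommGroup E] [InnerProductSpace 𝕜 E]

/- The condition `n ^ 2 ≤ (α - κ) * (β - κ)` makes the matrix `!![α - κ, -n; -n, β - κ]`, which
bounds the form of `T - κ` from below, positive semidefinite. -/
theorem le_re_inner_map_add_of_sq_le_mul {T : E →ₗ[𝕜] E} {u v : E} {α β κ n : ℝ} (hα : κ ≤ α)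
    (hβ : κ ≤ β) (hn : n ^ 2 ≤ (α - κ) * (β - κ)) (hu : α * ‖u‖ ^ 2 ≤ RCLike.re ⟪T u, u⟫_𝕜)
    (hv : β * ‖v‖ ^ 2 ≤ RCLike.re ⟪T v, v⟫_𝕜)
    (huv : -(n * ‖u‖ * ‖v‖) ≤ RCLike.re ⟪T u, v⟫_𝕜)
    (hvu : -(n * ‖v‖ * ‖u‖) ≤ RCLike.re ⟪T v, u⟫_𝕜) :
    κ * (‖u‖ ^ 2 + ‖v‖ ^ 2) ≤ RCLike.re ⟪T (u + v), u + v⟫_𝕜 := by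
  have hform : RCLike.re ⟪T (u + v), u + v⟫_𝕜 = RCLike.re ⟪T u, u⟫_𝕜 + RCLike.re ⟪T u, v⟫_𝕜 +
      (RCLike.re ⟪T v, u⟫_𝕜 + RCLike.re ⟪T v, v⟫_𝕜) := by
    simp only [map_add, inner_add_left, inner_add_right]
    ring
  have hamgm : 2 * (n * ‖u‖ * ‖v‖) ≤ (α - κ) * ‖u‖ ^ 2 + (β - κ) * ‖v‖ ^ 2 := by
    have hα' : 0 ≤ (α - κ) * ‖u‖ ^ 2 := mul_nonneg (sub_nonneg.2 hα) (sq_nonneg _)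
    have hβ' : 0 ≤ (β - κ) * ‖v‖ ^ 2 := mul_nonneg (sub_nonneg.2 hβ) (sq_nonneg _)
    refine le_of_abs_le (abs_le_of_sq_le_sq ?_ (add_nonneg hα' hβ'))
    linear_combination 4 * (‖u‖ ^ 2 * ‖v‖ ^ 2) * hn +
      sq_nonneg ((α - κ) * ‖u‖ ^ 2 - (β - κ) * ‖v‖ ^ 2)
  rw [hform]
  linarith

theorem mul_norm_add_le_norm_map_add {T : E →ₗ[𝕜] E} (hT : T.IsSymmetric) {p q : E}
    (hpq : ⟪p, q⟫_𝕜 = 0) {c : ℝ} (hp : c * ‖p‖ ^ 2 ≤ RCLike.re ⟪T p, p⟫_𝕜)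
    (hq : RCLike.re ⟪T q, q⟫_𝕜 ≤ -c * ‖q‖ ^ 2) : c * ‖p + q‖ ≤ ‖T (p + q)‖ := by
  have hadd : ‖p + q‖ ^ 2 = ‖p‖ ^ 2 + ‖q‖ ^ 2 := by
    rw [norm_add_sq (𝕜 := 𝕜), hpq, map_zero, mul_zero, add_zero]
  have hsub : ‖p - q‖ = ‖p + q‖ := by
    rw [← sq_eq_sq₀ (norm_nonneg _) (norm_nonneg _), norm_sub_sq (𝕜 := 𝕜), hadd, hpq, map_zero,
      mul_zero, sub_zero]
  have hsymm : RCLike.re ⟪T q, p⟫_𝕜 = RCLike.re ⟪T p, q⟫_𝕜 := by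
    rw [hT p q, inner_re_symm]
  -- Testing `T (p + q)` against `p - q` rather than `p + q` gives both blocks the same sign.
  have hform : RCLike.re ⟪T (p + q), p - q⟫_𝕜 =
      RCLike.re ⟪T p, p⟫_𝕜 - RCLike.re ⟪T q, q⟫_𝕜 := by
    simp only [map_add, map_sub, inner_add_left, inner_sub_right, hsymm]
    ring
  have hle : c * ‖p + q‖ * ‖p + q‖ ≤ ‖T (p + q)‖ * ‖p + q‖ := by
    calc c * ‖p + q‖ * ‖p + q‖ = c * ‖p‖ ^ 2 + c * ‖q‖ ^ 2 := by rw [mul_assoc, ← sq, hadd, mul_add]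
      _ ≤ RCLike.re ⟪T (p + q), p - q⟫_𝕜 := by rw [hform]; linarith
      _ ≤ ‖T (p + q)‖ * ‖p - q‖ := re_inner_le_norm _ _
      _ = ‖T (p + q)‖ * ‖p + q‖ := by rw [hsub]
  rcases (norm_nonneg (p + q)).eq_or_lt' with h0 | hpos
  · simp [h0]
  · exact le_of_mul_le_mul_right hle hpos

end QuadraticForm

theorem eq_zero_of_isIdempotentElem_of_norm_lt_one {R : Type*} [NonUnitalNormedRing R] {p : R}
    (hp : IsIdempotentElem p) (hlt : ‖p‖ < 1) : p = 0 := by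
  have hle : ‖p‖ ≤ ‖p‖ * ‖p‖ := by simpa only [hp.eq] using norm_mul_le p p
  exact norm_le_zero_iff.1 (by nlinarith [norm_nonneg p])

theorem norm_le_of_spectrum_subset_Icc {R : Type*} [CStarAlgebra R] {a : R}
    (ha : IsSelfAdjoint a) {r : ℝ} (hr : 0 ≤ r) (h : spectrum ℝ a ⊆ Set.Icc (-r) r) :
    ‖a‖ ≤ r := by
  rw [← cfc_id ℝ a]
  exact norm_cfc_le hr fun t ht => abs_le.2 (h ht)

section SelfAdjoint

variable {H : Type*} [NormedAddCommGroup H] [InnerProductSpace ℂ H]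

theorem re_inner_sub_ofReal_smul_self (x y : H) (t : ℝ) :
    RCLike.re ⟪y - (t : ℂ) • x, x⟫_ℂ = RCLike.re ⟪y, x⟫_ℂ - t * ‖x‖ ^ 2 := by
  rw [inner_sub_left, inner_smul_left, map_sub, Complex.conj_ofReal]
  exact congrArg _ ((Complex.re_ofReal_mul _ _).trans
    (congrArg _ (inner_self_eq_norm_sq (𝕜 := ℂ) x)))

theorem sub_algebraMap_real_apply (T : H →L[ℂ] H) (t : ℝ) (x : H) :
    (T - algebraMap ℝ (H →L[ℂ] H) t) x = T x - (t : ℂ) • x := by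
  simp [Algebra.algebraMap_eq_smul_one]

variable [CompleteSpace H] {T P : H →L[ℂ] H}

theorem isSelfAdjoint_sub_algebraMap_real (hT : IsSelfAdjoint T) (t : ℝ) :
    IsSelfAdjoint (T - algebraMap ℝ (H →L[ℂ] H) t) :=
  hT.sub (.algebraMap _ (.all t))

theorem notMem_spectrum_of_mul_norm_le (hT : IsSelfAdjoint T) {c ν : ℝ} (hc : 0 < c)
    (h : ∀ x, c * ‖x‖ ≤ ‖T x - (ν : ℂ) • x‖) : ν ∉ spectrum ℝ T := by
  set S := T - algebraMap ℝ (H →L[ℂ] H) ν with hSdef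
  have hS : IsSelfAdjoint S := isSelfAdjoint_sub_algebraMap_real hT ν
  have hSS : IsUnit (S * S) := by
    refine ContinuousLinearMap.isUnit_of_forall_le_norm_inner_map (S * S)
      (c := ⟨c ^ 2, by positivity⟩) (pow_pos hc 2) fun x => ?_
    calc ‖x‖ ^ 2 * c ^ 2 = (c * ‖x‖) ^ 2 := by ring
      _ ≤ ‖S x‖ ^ 2 := by
        rw [hSdef, sub_algebraMap_real_apply]
        gcongr
        exact h x
      _ = ‖⟪S x, S x⟫_ℂ‖ := by
        rw [inner_self_eq_norm_sq_to_K, norm_pow, RCLike.norm_ofReal, abs_norm]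
      _ = ‖⟪(S * S) x, x⟫_ℂ‖ := congrArg norm (hS.isSymmetric (S x) x).symm
  rw [spectrum.notMem_iff, ← IsUnit.neg_iff, neg_sub]
  exact ((Commute.refl S).isUnit_mul_iff.1 hSS).1

theorem inner_eq_zero_of_apply_eq_self_of_apply_eq_zero (hP : IsSelfAdjoint P) {x y : H}
    (hx : P x = x) (hy : P y = 0) : ⟪x, y⟫_ℂ = 0 := by
  rw [← hx, show ⟪P x, y⟫_ℂ = ⟪x, P y⟫_ℂ from hP.isSymmetric x y, hy, inner_zero_right]

theorem notMem_spectrum_mul_of_mul_norm_le (hT : IsSelfAdjoint T) (hP : IsStarProjection P)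
    (hTP : Commute T P) {c ν : ℝ} (hc : 0 < c) (hcν : c ≤ |ν|)
    (h : ∀ x, P x = x → c * ‖x‖ ≤ ‖T x - (ν : ℂ) • x‖) : ν ∉ spectrum ℝ (T * P) := by
  refine notMem_spectrum_of_mul_norm_le ((hT.commute_iff hP.isSelfAdjoint).1 hTP) hc fun x => ?_
  have hPP : P (P x) = P x := congr($hP.isIdempotentElem.eq x)
  have hPT : P (T (P x)) = T (P x) := by
    simpa only [mul_apply_eq_comp, hPP] using congr($hTP.eq.symm (P x))
  have hker : P (x - P x) = 0 := by rw [map_sub, hPP, sub_self]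
  have horth : ⟪P x, x - P x⟫_ℂ = 0 :=
    inner_eq_zero_of_apply_eq_self_of_apply_eq_zero hP.isSelfAdjoint hPP hker
  have horth' : ⟪T (P x) - (ν : ℂ) • P x, (ν : ℂ) • (x - P x)⟫_ℂ = 0 :=
    inner_eq_zero_of_apply_eq_self_of_apply_eq_zero hP.isSelfAdjoint
      (by rw [map_sub, map_smul, hPT, hPP]) (by rw [map_smul, hker, smul_zero])
  have hx : ‖x‖ ^ 2 = ‖P x‖ ^ 2 + ‖x - P x‖ ^ 2 := by
    simpa [horth] using norm_add_sq (𝕜 := ℂ) (P x) (x - P x)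
  refine (sq_le_sq₀ (by positivity) (norm_nonneg _)).1 ?_
  calc (c * ‖x‖) ^ 2 = (c * ‖P x‖) ^ 2 + (c * ‖x - P x‖) ^ 2 := by
        rw [mul_pow, hx]
        ring
    _ ≤ ‖T (P x) - (ν : ℂ) • P x‖ ^ 2 + (|ν| * ‖x - P x‖) ^ 2 := by
        gcongr
        exact h (P x) hPP
    _ = ‖T (P x) - (ν : ℂ) • P x - (ν : ℂ) • (x - P x)‖ ^ 2 := by
        rw [norm_sub_sq (𝕜 := ℂ) (_ - _), horth', norm_smul, Complex.norm_real, Real.norm_eq_abs,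
          map_zero, mul_zero, sub_zero]
    _ = ‖(T * P) x - (ν : ℂ) • x‖ ^ 2 := by
        rw [smul_sub, sub_sub_sub_cancel_right]
        rfl

end SelfAdjoint

namespace IsSpectralMeasure

variable {H : Type*} [NormedAddCommGroup H] [InnerProductSpace ℂ H] [CompleteSpace H]
  {A V : H →L[ℂ] H} {E : Set ℝ → H →L[ℂ] H} {S T : Set ℝ}

theorem isStarProjection (hE : IsSpectralMeasure A E) (hS : MeasurableSet S) :
    IsStarProjection (E S) :=
  ⟨(hE.map_inter S S hS hS).trans (by rw [Set.inter_self]), hE.isSelfAdjoint S hS⟩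

theorem apply_apply (hE : IsSpectralMeasure A E) (hS : MeasurableSet S) (hT : MeasurableSet T)
    (x : H) : E S (E T x) = E (S ∩ T) x :=
  congr($(hE.map_inter S T hS hT) x)

theorem apply_eq_self_of_subset (hE : IsSpectralMeasure A E) (hS : MeasurableSet S)
    (hT : MeasurableSet T) (hST : S ⊆ T) {x : H} (hx : E S x = x) : E T x = x := by
  rw [← hx, hE.apply_apply hT hS, Set.inter_eq_right.2 hST]

theorem apply_map_eq_map (hE : IsSpectralMeasure A E) (hS : MeasurableSet S) {x : H}
    (hx : E S x = x) : E S (A x) = A x := by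
  simpa only [mul_apply_eq_comp, hx] using congr($((hE.commutes S hS).eq.symm) x)

theorem map_empty (hE : IsSpectralMeasure A E) : E ∅ = 0 := by
  ext x
  have h := (hE.countably_additive (fun _ => ∅) (fun _ => .empty)
    (fun _ _ _ => disjoint_bot_left) x).summable
  exact (summable_const_iff _).1 h

open Classical in
/-- The `H`-valued measure `S ↦ E S x` of a vector `x`, extended by zero to non-measurable sets,
through which `E` inherits finite additivity from vector measures. -/
noncomputable def vectorMeasure (hE : IsSpectralMeasure A E) (x : H) :
    MeasureTheory.VectorMeasure ℝ H where
  measureOf' S := if MeasurableSet S then E S x else 0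
  empty' := by simp [hE.map_empty]
  not_measurable' S hS := if_neg hS
  m_iUnion' S hS hd := by simpa [hS, MeasurableSet.iUnion hS] using hE.countably_additive S hS hd x

theorem vectorMeasure_apply (hE : IsSpectralMeasure A E) (hS : MeasurableSet S) (x : H) :
    hE.vectorMeasure x S = E S x :=
  if_pos hS

theorem map_union (hE : IsSpectralMeasure A E) (hS : MeasurableSet S) (hT : MeasurableSet T)
    (hST : Disjoint S T) : E (S ∪ T) = E S + E T := by
  ext x
  simpa only [hE.vectorMeasure_apply, hS, hT, hS.union hT, add_apply] using
    (hE.vectorMeasure x).of_union hST hS hT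

theorem map_eq_zero_of_subset (hE : IsSpectralMeasure A E) (hS : MeasurableSet S)
    (hT : MeasurableSet T) (hST : S ⊆ T) (h : E T = 0) : E S = 0 := by
  rw [← Set.inter_eq_left.2 hST, ← hE.map_inter S T hS hT, h, mul_zero]

theorem map_iUnion_eq_zero (hE : IsSpectralMeasure A E) {ι : Type*} [Countable ι] {S : ι → Set ℝ}
    (hS : ∀ i, MeasurableSet (S i)) (h : ∀ i, E (S i) = 0) : E (⋃ i, S i) = 0 := by
  rcases isEmpty_or_nonempty ι with _ | _
  · rw [Set.iUnion_of_empty, hE.map_empty]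
  obtain ⟨f, hf⟩ := exists_surjective_nat ι
  let D : ℕ → Set ℝ := disjointed fun n => S (f n)
  have hD : ∀ n, MeasurableSet (D n) := MeasurableSet.disjointed fun n => hS (f n)
  have hD0 : ∀ n, E (D n) = 0 := fun n =>
    hE.map_eq_zero_of_subset (hD n) (hS (f n)) (disjointed_subset _ n) (h (f n))
  have hDS : ⋃ n, D n = ⋃ i, S i := iUnion_disjointed.trans (hf.iUnion_comp S)
  ext x
  have hsum := hE.countably_additive D hD (disjoint_disjointed _) x
  simp only [hD0, hDS, zero_apply] at hsum
  exact hsum.unique hasSum_zero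

theorem map_eq_zero_of_forall_nhds (hE : IsSpectralMeasure A E) (hS : MeasurableSet S)
    (h : ∀ μ ∈ S, ∃ U ∈ nhds μ, MeasurableSet U ∧ E U = 0) : E S = 0 := by
  choose! U hU hUm hU0 using h
  obtain ⟨t, htc, htS, hcov⟩ := (HereditarilyLindelofSpace.isLindelof S).elim_nhds_subcover U hU
  have := htc.to_subtype
  rw [Set.biUnion_eq_iUnion] at hcov
  have hUt : ∀ μ : t, MeasurableSet (U μ) := fun μ => hUm μ (htS μ μ.2)
  exact hE.map_eq_zero_of_subset hS (.iUnion hUt) hcov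
    (hE.map_iUnion_eq_zero hUt fun μ => hU0 μ (htS μ μ.2))

theorem neg (hE : IsSpectralMeasure A E) : IsSpectralMeasure (-A) fun S => E (-S) where
  isSelfAdjoint S hS := hE.isSelfAdjoint _ hS.neg
  map_inter S T hS hT := by rw [hE.map_inter _ _ hS.neg hT.neg, Set.inter_neg]
  map_univ := by simpa using hE.map_univ
  countably_additive S hS hd x := by
    simpa [Set.iUnion_neg] using hE.countably_additive (fun n => -S n) (fun n => (hS n).neg)
      (fun _ _ hij => (hd hij).preimage _) x
  commutes S hS := (hE.commutes _ hS.neg).neg_left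
  spectrum_loc S hS x hx μ := by
    have hdist : Metric.infDist (-μ) (-S) = Metric.infDist μ S := by
      rw [← Set.image_neg_eq_neg]
      exact Metric.infDist_image (IsometryEquiv.neg ℝ).isometry
    have hnorm : ‖A x - ((-μ : ℝ) : ℂ) • x‖ = ‖(-A) x - (μ : ℂ) • x‖ := by
      rw [← norm_neg]
      congr 1
      simp only [Complex.ofReal_neg, neg_smul, neg_apply]
      abel
    simpa only [hdist, hnorm] using hE.spectrum_loc (-S) hS.neg x hx (-μ)

theorem inner_eq_zero_of_disjoint (hE : IsSpectralMeasure A E) (hS : MeasurableSet S)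
    (hT : MeasurableSet T) (hST : Disjoint S T) {x y : H} (hx : E S x = x) (hy : E T y = y) :
    ⟪x, y⟫_ℂ = 0 := by
  refine inner_eq_zero_of_apply_eq_self_of_apply_eq_zero (hE.isSelfAdjoint S hS) hx ?_
  rw [← hy, hE.apply_apply hS hT, hST.inter_eq, hE.map_empty, zero_apply]

theorem isSelfAdjoint_sub_algebraMap_mul (hE : IsSpectralMeasure A E) (hA : IsSelfAdjoint A)
    (hS : MeasurableSet S) (t : ℝ) :
    IsSelfAdjoint ((A - algebraMap ℝ (H →L[ℂ] H) t) * E S) :=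
  ((isSelfAdjoint_sub_algebraMap_real hA t).commute_iff (hE.isSelfAdjoint S hS)).1
    ((hE.commutes S hS).sub_left (Algebra.commutes t (E S)))

theorem exists_mul_norm_le_of_notMem_closure (hE : IsSpectralMeasure A E) (hS : MeasurableSet S)
    {μ : ℝ} (hμ : μ ∉ closure S) :
    ∃ c > 0, ∀ x, E S x = x → c * ‖x‖ ≤ ‖A x - (μ : ℂ) • x‖ := by
  rcases S.eq_empty_or_nonempty with rfl | hne
  · refine ⟨1, one_pos, fun x hx => ?_⟩
    rw [hE.map_empty, zero_apply] at hx
    simp [← hx]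
  · exact ⟨Metric.infDist μ S, (Metric.infDist_pos_iff_notMem_closure hne).1 hμ,
      fun x hx => hE.spectrum_loc S hS x hx μ⟩

/- The point `0` is the contribution of the kernel of `E S`. -/
theorem spectrum_sub_algebraMap_mul_subset (hE : IsSpectralMeasure A E) (hA : IsSelfAdjoint A)
    (hS : MeasurableSet S) (t : ℝ) :
    spectrum ℝ ((A - algebraMap ℝ (H →L[ℂ] H) t) * E S) ⊆ insert 0 {ν | t + ν ∈ closure S} := by
  intro ν hν
  by_contra! hν'
  obtain ⟨hν0, hνS⟩ := not_or.1 hν'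
  obtain ⟨c, hc, hcA⟩ := hE.exists_mul_norm_le_of_notMem_closure hS hνS
  refine notMem_spectrum_mul_of_mul_norm_le (isSelfAdjoint_sub_algebraMap_real hA t)
    (hE.isStarProjection hS) ((hE.commutes S hS).sub_left (Algebra.commutes t (E S)))
    (lt_min (abs_pos.2 hν0) hc) (min_le_left _ _) (fun x hx => ?_) hν
  calc min |ν| c * ‖x‖ ≤ c * ‖x‖ := by
        gcongr
        exact min_le_right _ _
    _ ≤ ‖A x - ((t + ν : ℝ) : ℂ) • x‖ := hcA x hx
    _ = ‖(A - algebraMap ℝ (H →L[ℂ] H) t) x - (ν : ℂ) • x‖ := by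
        rw [sub_algebraMap_real_apply, Complex.ofReal_add, add_smul, sub_sub]

theorem mul_norm_sq_le_re_inner_of_subset_Ici (hE : IsSpectralMeasure A E) (hA : IsSelfAdjoint A)
    (hS : MeasurableSet S) {t : ℝ} (hSt : S ⊆ Set.Ici t) {x : H} (hx : E S x = x) :
    t * ‖x‖ ^ 2 ≤ RCLike.re ⟪A x, x⟫_ℂ := by
  have hnonneg : 0 ≤ (A - algebraMap ℝ (H →L[ℂ] H) t) * E S := by
    rw [StarOrderedRing.nonneg_iff_spectrum_nonneg (R := ℝ) _
      (hE.isSelfAdjoint_sub_algebraMap_mul hA hS t)]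
    intro ν hν
    rcases hE.spectrum_sub_algebraMap_mul_subset hA hS t hν with rfl | hνS
    · rfl
    · exact le_add_iff_nonneg_right t |>.1 (closure_minimal hSt isClosed_Ici hνS)
  have hform := ((ContinuousLinearMap.nonneg_iff_isPositive _).1 hnonneg).re_inner_nonneg_left x
  rwa [mul_apply_eq_comp, hx, sub_algebraMap_real_apply,
    re_inner_sub_ofReal_smul_self, sub_nonneg] at hform

theorem norm_sub_algebraMap_mul_le (hE : IsSpectralMeasure A E) (hA : IsSelfAdjoint A)
    (hS : MeasurableSet S) {μ r : ℝ} (hr : 0 ≤ r) (hSr : S ⊆ Metric.closedBall μ r) :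
    ‖(A - algebraMap ℝ (H →L[ℂ] H) μ) * E S‖ ≤ r := by
  refine norm_le_of_spectrum_subset_Icc (hE.isSelfAdjoint_sub_algebraMap_mul hA hS μ) hr ?_
  intro ν hν
  rcases hE.spectrum_sub_algebraMap_mul_subset hA hS μ hν with rfl | hνS
  · simpa using hr
  · simpa [abs_le] using closure_minimal hSr Metric.isClosed_closedBall hνS

/- If `R` is the inverse of `A - μ`, then `E (closedBall μ r) = R * ((A - μ) * E (closedBall μ r))`
is a projection of norm at most `‖R‖ * r`. -/
theorem exists_map_closedBall_eq_zero (hE : IsSpectralMeasure A E) (hA : IsSelfAdjoint A) {μ : ℝ}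
    (hμ : μ ∉ spectrum ℝ A) : ∃ r > 0, E (Metric.closedBall μ r) = 0 := by
  rw [spectrum.notMem_iff, ← IsUnit.neg_iff, neg_sub] at hμ
  obtain ⟨R, hR⟩ := hμ.exists_left_inv
  have hr : 0 < (‖R‖ + 1)⁻¹ := by positivity
  set P := E (Metric.closedBall μ (‖R‖ + 1)⁻¹)
  have hball : MeasurableSet (Metric.closedBall μ (‖R‖ + 1)⁻¹) := measurableSet_closedBall
  refine ⟨(‖R‖ + 1)⁻¹, hr, eq_zero_of_isIdempotentElem_of_norm_lt_one
    (hE.isStarProjection hball).isIdempotentElem ?_⟩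
  calc ‖P‖ = ‖R * ((A - algebraMap ℝ (H →L[ℂ] H) μ) * P)‖ := by rw [← mul_assoc, hR, one_mul]
    _ ≤ ‖R‖ * (‖R‖ + 1)⁻¹ := (norm_mul_le _ _).trans <| by
        gcongr
        exact hE.norm_sub_algebraMap_mul_le hA hball hr.le subset_rfl
    _ < 1 := by
        rw [← div_eq_mul_inv, div_lt_one (by positivity)]
        exact lt_add_one _

theorem map_compl_spectrum (hE : IsSpectralMeasure A E) (hA : IsSelfAdjoint A) :
    E (spectrum ℝ A)ᶜ = 0 := by
  refine hE.map_eq_zero_of_forall_nhds (spectrum.isClosed A).measurableSet.compl fun μ hμ => ?_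
  obtain ⟨r, hr, hr0⟩ := hE.exists_map_closedBall_eq_zero hA hμ
  exact ⟨_, Metric.closedBall_mem_nhds μ hr, measurableSet_closedBall, hr0⟩

theorem map_inter_spectrum (hE : IsSpectralMeasure A E) (hA : IsSelfAdjoint A)
    (hS : MeasurableSet S) : E (S ∩ spectrum ℝ A) = E S := by
  have hm : MeasurableSet (spectrum ℝ A) := (spectrum.isClosed A).measurableSet
  have hcompl : E (S \ spectrum ℝ A) = 0 := hE.map_eq_zero_of_subset (hS.diff hm) hm.compl
    (Set.sdiff_subset_compl _ _) (hE.map_compl_spectrum hA)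
  conv_rhs => rw [← Set.inter_union_sdiff S (spectrum ℝ A), hE.map_union (hS.inter hm) (hS.diff hm)
    Set.disjoint_sdiff_inter.symm, hcompl, add_zero]

theorem apply_eq_self_of_inter_spectrum_subset (hE : IsSpectralMeasure A E) (hA : IsSelfAdjoint A)
    (hS : MeasurableSet S) (hT : MeasurableSet T) (hST : S ∩ spectrum ℝ A ⊆ T) {x : H}
    (hx : E S x = x) : E T x = x :=
  hE.apply_eq_self_of_subset (hS.inter (spectrum.isClosed A).measurableSet) hT hST
    (by rwa [hE.map_inter_spectrum hA hS])

theorem mul_norm_sq_le_re_inner_add_of_compression_eq_zero (hE : IsSpectralMeasure A E)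
    (hA : IsSelfAdjoint A) {σ : Set ℝ} (hσ : MeasurableSet σ) (hVσ : E σ * V * E σ = 0)
    (hS : MeasurableSet S) (hSσ : S ⊆ σ) {t : ℝ} (hSt : S ⊆ Set.Ici t) {x : H} (hx : E S x = x) :
    t * ‖x‖ ^ 2 ≤ RCLike.re ⟪(A + V) x, x⟫_ℂ := by
  have hσx : E σ x = x := hE.apply_eq_self_of_subset hS hσ hSσ hx
  have hV : E σ (V x) = 0 := by
    simpa only [mul_apply_eq_comp, hσx, zero_apply] using congr($hVσ x)
  have hVx : ⟪V x, x⟫_ℂ = 0 := inner_eq_zero_symm.1 <|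
    inner_eq_zero_of_apply_eq_self_of_apply_eq_zero (hE.isSelfAdjoint σ hσ) hσx hV
  rw [add_apply, inner_add_left, hVx, add_zero]
  exact hE.mul_norm_sq_le_re_inner_of_subset_Ici hA hS hSt hx

theorem neg_mul_norm_mul_norm_le_re_inner_add (hE : IsSpectralMeasure A E) (V : H →L[ℂ] H)
    (hS : MeasurableSet S) (hT : MeasurableSet T) (hST : Disjoint S T) {x y : H} (hx : E S x = x)
    (hy : E T y = y) : -(‖V‖ * ‖x‖ * ‖y‖) ≤ RCLike.re ⟪(A + V) x, y⟫_ℂ := by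
  have hAxy : ⟪A x, y⟫_ℂ = 0 :=
    hE.inner_eq_zero_of_disjoint hS hT hST (hE.apply_map_eq_map hS hx) hy
  rw [add_apply, inner_add_left, hAxy, zero_add]
  refine neg_le_of_abs_le ?_
  calc |RCLike.re ⟪V x, y⟫_ℂ| ≤ ‖⟪V x, y⟫_ℂ‖ := RCLike.abs_re_le_norm _
    _ ≤ ‖V x‖ * ‖y‖ := norm_inner_le_norm _ _
    _ ≤ ‖V‖ * ‖x‖ * ‖y‖ := by
        gcongr
        exact V.le_opNorm x

theorem mul_norm_sq_le_re_inner_add_of_sq_le_mul (hE : IsSpectralMeasure A E)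
    (hA : IsSelfAdjoint A) {σ τ : Set ℝ} (hσ : MeasurableSet σ) (hτ : MeasurableSet τ)
    (hστ : Disjoint σ τ) (hVσ : E σ * V * E σ = 0) (hVτ : E τ * V * E τ = 0)
    (hS : MeasurableSet S) (hT : MeasurableSet T) (hSσ : S ⊆ σ) (hTτ : T ⊆ τ) {α β κ : ℝ}
    (hSα : S ⊆ Set.Ici α) (hTβ : T ⊆ Set.Ici β) (hα : κ ≤ α) (hβ : κ ≤ β)
    (hV : ‖V‖ ^ 2 ≤ (α - κ) * (β - κ)) {y : H} (hy : E (S ∪ T) y = y) :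
    κ * ‖y‖ ^ 2 ≤ RCLike.re ⟪(A + V) y, y⟫_ℂ := by
  have hST : Disjoint S T := hστ.mono hSσ hTτ
  have hu : E S (E S y) = E S y := by rw [hE.apply_apply hS hS, Set.inter_self]
  have hv : E T (E T y) = E T y := by rw [hE.apply_apply hT hT, Set.inter_self]
  have huv : ⟪E S y, E T y⟫_ℂ = 0 := hE.inner_eq_zero_of_disjoint hS hT hST hu hv
  have hsum : E S y + E T y = y := by rw [← add_apply, ← hE.map_union hS hT hST, hy]
  have hnorm : ‖E S y‖ ^ 2 + ‖E T y‖ ^ 2 = ‖y‖ ^ 2 := by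
    conv_rhs => rw [← hsum, norm_add_sq (𝕜 := ℂ), huv, map_zero, mul_zero, add_zero]
  have h := le_re_inner_map_add_of_sq_le_mul (T := ((A + V : H →L[ℂ] H) : H →ₗ[ℂ] H)) hα hβ hV
    (hE.mul_norm_sq_le_re_inner_add_of_compression_eq_zero hA hσ hVσ hS hSσ hSα hu)
    (hE.mul_norm_sq_le_re_inner_add_of_compression_eq_zero hA hτ hVτ hT hTτ hTβ hv)
    (hE.neg_mul_norm_mul_norm_le_re_inner_add V hS hT hST hu hv)
    (hE.neg_mul_norm_mul_norm_le_re_inner_add V hT hS hST.symm hv hu)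
  rwa [hnorm, hsum] at h

section Gap

variable {σ τ : Set ℝ} {d δ : ℝ}

theorem sub_mul_norm_sq_le_re_inner_add (hE : IsSpectralMeasure A E) (hA : IsSelfAdjoint A)
    (hσ : MeasurableSet σ) (hτ : MeasurableSet τ) (hspec : spectrum ℝ A = σ ∪ τ)
    (hVσ : E σ * V * E σ = 0) (hVτ : E τ * V * E τ = 0) (hd0 : 0 < d)
    (hd : ∀ s ∈ σ, ∀ t ∈ τ, d ≤ dist s t) (hδ : 0 ≤ δ) (hδV : δ * (δ + d) = ‖V‖ ^ 2) {a : ℝ}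
    {y : H} (hy : E (Set.Ici a) y = y) :
    (a - δ) * ‖y‖ ^ 2 ≤ RCLike.re ⟪(A + V) y, y⟫_ℂ := by
  have hστ : Disjoint σ τ := Set.disjoint_left.2 fun s hs ht =>
    (hd0.trans_le (hd s hs s ht)).ne' (dist_self s)
  have hI : MeasurableSet (Set.Ici a) := measurableSet_Ici
  have hy' : E (σ ∩ Set.Ici a ∪ τ ∩ Set.Ici a) y = y := by
    rwa [← Set.union_inter_distrib_right, ← hspec, Set.inter_comm, hE.map_inter_spectrum hA hI]
  rcases inter_Ici_subset_Ici_add_or_of_forall_le_dist hd a with h | h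
  · exact hE.mul_norm_sq_le_re_inner_add_of_sq_le_mul hA hσ hτ hστ hVσ hVτ (hσ.inter hI)
      (hτ.inter hI) Set.inter_subset_left Set.inter_subset_left h Set.inter_subset_right
      (by linarith) (by linarith) (by linarith) hy'
  · rw [Set.union_comm] at hy'
    exact hE.mul_norm_sq_le_re_inner_add_of_sq_le_mul hA hτ hσ hστ.symm hVτ hVσ (hτ.inter hI)
      (hσ.inter hI) Set.inter_subset_left Set.inter_subset_left h Set.inter_subset_right
      (by linarith) (by linarith) (by linarith) hy'

theorem re_inner_add_le_add_mul_norm_sq (hE : IsSpectralMeasure A E) (hA : IsSelfAdjoint A)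
    (hσ : MeasurableSet σ) (hτ : MeasurableSet τ) (hspec : spectrum ℝ A = σ ∪ τ)
    (hVσ : E σ * V * E σ = 0) (hVτ : E τ * V * E τ = 0) (hd0 : 0 < d)
    (hd : ∀ s ∈ σ, ∀ t ∈ τ, d ≤ dist s t) (hδ : 0 ≤ δ) (hδV : δ * (δ + d) = ‖V‖ ^ 2) {a : ℝ}
    {y : H} (hy : E (Set.Iic a) y = y) :
    RCLike.re ⟪(A + V) y, y⟫_ℂ ≤ (a + δ) * ‖y‖ ^ 2 := by
  have h := hE.neg.sub_mul_norm_sq_le_re_inner_add hA.neg (V := -V) (a := -a) (y := y) hσ.neg hτ.neg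
    (by rw [← spectrum.neg_eq, hspec, Set.union_neg]) (by simpa using hVσ) (by simpa using hVτ)
    hd0 (fun s hs t ht => by simpa only [dist_neg_neg] using hd _ hs _ ht) hδ (by rwa [norm_neg])
    (by rwa [Set.neg_Ici, neg_neg])
  rw [← neg_add, neg_apply, inner_neg_left, map_neg] at h
  linarith

theorem sub_mul_norm_le_norm_add_sub_smul (hE : IsSpectralMeasure A E) (hA : IsSelfAdjoint A)
    (hV : IsSelfAdjoint V) (hσ : MeasurableSet σ) (hτ : MeasurableSet τ)
    (hspec : spectrum ℝ A = σ ∪ τ) (hVσ : E σ * V * E σ = 0) (hVτ : E τ * V * E τ = 0)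
    (hd0 : 0 < d) (hd : ∀ s ∈ σ, ∀ t ∈ τ, d ≤ dist s t) (hδ : 0 ≤ δ)
    (hδV : δ * (δ + d) = ‖V‖ ^ 2) {m l : ℝ} (hm : ∀ s ∈ spectrum ℝ A, m ≤ dist l s) (x : H) :
    (m - δ) * ‖x‖ ≤ ‖(A + V) x - (l : ℂ) • x‖ := by
  have hI : MeasurableSet (Set.Ici l) := measurableSet_Ici
  have hJ : MeasurableSet (Set.Iio l) := measurableSet_Iio
  have hIJ : Disjoint (Set.Ici l) (Set.Iio l) := (Set.Iio_disjoint_Ici le_rfl).symm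
  have hp : E (Set.Ici l) (E (Set.Ici l) x) = E (Set.Ici l) x := by
    rw [hE.apply_apply hI hI, Set.inter_self]
  have hq : E (Set.Iio l) (E (Set.Iio l) x) = E (Set.Iio l) x := by
    rw [hE.apply_apply hJ hJ, Set.inter_self]
  have hsum : E (Set.Ici l) x + E (Set.Iio l) x = x := by
    rw [← add_apply, ← hE.map_union hI hJ hIJ, Set.union_comm, Set.Iio_union_Ici, hE.map_univ]
    rfl
  have hp' : E (Set.Ici (l + m)) (E (Set.Ici l) x) = E (Set.Ici l) x :=
    hE.apply_eq_self_of_inter_spectrum_subset hA hI measurableSet_Ici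
      (Ici_inter_subset_Ici_add_of_forall_le_dist hm) hp
  have hq' : E (Set.Iic (l - m)) (E (Set.Iio l) x) = E (Set.Iio l) x :=
    hE.apply_eq_self_of_inter_spectrum_subset hA hJ measurableSet_Iic
      (Iio_inter_subset_Iic_sub_of_forall_le_dist hm) hq
  have hlow :=
    hE.sub_mul_norm_sq_le_re_inner_add hA hσ hτ hspec hVσ hVτ hd0 hd hδ hδV hp'
  have hupp :=
    hE.re_inner_add_le_add_mul_norm_sq hA hσ hτ hspec hVσ hVτ hd0 hd hδ hδV hq'
  have hsymm := (isSelfAdjoint_sub_algebraMap_real (hA.add hV) l).isSymmetric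
  have h := mul_norm_add_le_norm_map_add hsymm (c := m - δ)
    (hE.inner_eq_zero_of_disjoint hI hJ hIJ hp hq)
    (by
      rw [ContinuousLinearMap.coe_coe, sub_algebraMap_real_apply, re_inner_sub_ofReal_smul_self]
      linarith)
    (by
      rw [ContinuousLinearMap.coe_coe, sub_algebraMap_real_apply, re_inner_sub_ofReal_smul_self]
      linarith)
  rwa [hsum, ContinuousLinearMap.coe_coe, sub_algebraMap_real_apply] at h

end Gap

end IsSpectralMeasure

theorem spectrum_subset_closed_neighborhood_general
    {H : Type*} [NormedAddCommGroup H] [InnerProductSpace ℂ H] [CompleteSpace H]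
    {A V : H →L[ℂ] H} (hA : IsSelfAdjoint A) (hV : IsSelfAdjoint V) {σ τ : Set ℝ}
    (hspec : spectrum ℝ A = σ ∪ τ) {d : ℝ} (hd0 : 0 < d)
    (hd : ∀ s ∈ σ, ∀ t ∈ τ, d ≤ dist s t) {E : Set ℝ → H →L[ℂ] H}
    (hE : IsSpectralMeasure A E) (hVσ : E σ * V * E σ = 0) (hVτ : E τ * V * E τ = 0) :
    spectrum ℝ (A + V) ⊆ {x : ℝ | Metric.infDist x (spectrum ℝ A) ≤
      ‖V‖ * Real.tan (Real.arctan (2 * ‖V‖ / d) / 2)} := by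
  have hσ : MeasurableSet σ := (isClosed_of_isClosed_union_of_forall_le_dist
    (hspec ▸ spectrum.isClosed A) hd0 hd).measurableSet
  have hτ : MeasurableSet τ := (isClosed_of_isClosed_union_of_forall_le_dist
    (Set.union_comm σ τ ▸ hspec ▸ spectrum.isClosed A) hd0
    fun t ht s hs => (hd s hs t ht).trans_eq (dist_comm s t)).measurableSet
  intro x hx
  rw [Set.mem_ofPred_eq]
  by_contra! hlt
  refine notMem_spectrum_of_mul_norm_le (hA.add hV) (sub_pos.2 hlt) (fun y => ?_) hx
  exact hE.sub_mul_norm_le_norm_add_sub_smul hA hV hσ hτ hspec hVσ hVτ hd0 hd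
    (mul_tan_half_arctan_nonneg (norm_nonneg V) hd0.le)
    (mul_tan_half_arctan_mul_self_add hd0.ne') (fun s hs => Metric.infDist_le_dist_of_mem hs) y

/-- **Theorem (perturbation of spectra, Theorem 2.1 (i)).**
If `spec A = σ ∪ Σ` with `dist (σ, Σ) = d > 0` and the bounded self-adjoint perturbation
`V` is off-diagonal with respect to `H = Ran E_A(σ) ⊕ Ran E_A(Σ)`, then the spectrum of
`B = A + V` is contained in the closed `δ_V`-neighborhood of the spectrum of `A`, where
`δ_V = ‖V‖ tan((1/2) arctan (2‖V‖/d))`. -/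
theorem spectrum_subset_closed_neighborhood
    {H : Type*} [NormedAddCommGroup H] [InnerProductSpace ℂ H] [CompleteSpace H]
    [TopologicalSpace.SeparableSpace H]
    (A V B : H →L[ℂ] H) (hA : IsSelfAdjoint A) (hV : IsSelfAdjoint V) (hB : B = A + V)
    (σ Sig : Set ℝ) (hσc : IsClosed σ) (hSigc : IsClosed Sig) (hdisj : Disjoint σ Sig)
    (hspec : spectrum ℝ A = σ ∪ Sig)
    (d : ℝ) (hd : d = sInf (Set.image2 dist σ Sig)) (hd0 : 0 < d)
    (EA : Set ℝ → H →L[ℂ] H) (hEA : IsSpectralMeasure A EA)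
    (hoff₁ : EA σ * V * EA σ = 0) (hoff₂ : EA Sig * V * EA Sig = 0)
    (δ : ℝ) (hδ : δ = ‖V‖ * Real.tan (Real.arctan (2 * ‖V‖ / d) / 2)) :
    spectrum ℝ B ⊆ {x : ℝ | Metric.infDist x (spectrum ℝ A) ≤ δ} := by
  rw [hB, hδ]
  exact spectrum_subset_closed_neighborhood_general hA hV hspec hd0
    (fun _ hs _ ht => hd.trans_le (sInf_image2_dist_le_dist hs ht)) hEA hoff₁ hoff₂
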